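/- Let K ⊆ ℂ be a nonempty compact convex set and α ∈ K. Then the set {P·e_α : P a polynomial}, where e_α(z) := e^{αz}, is dense in Exp(K): for every g ∈ Exp(K), every n ∈ ℕ and every ε > 0 there exists a polynomial P with ‖g − P·e_α‖_{K,n} < ε. -/

import Mathlib

open Filter Complex

/-- Support function `H_K(z) = sup { Re (z·u) : u ∈ K }` of a set `K ⊆ ℂ`. -/
noncomputable def suppFn (K : Set ℂ) (z : ℂ) : ℝ :=
  sSup ((fun u => (z * u).re) '' K)

/-- The norm `‖f‖_{K,n} = sup_z |f z| · exp (−H_K z − |z|/n)`. -/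
noncomputable def expNorm (K : Set ℂ) (n : ℕ) (f : ℂ → ℂ) : ℝ :=
  sSup (Set.range fun z : ℂ => ‖f z‖ * Real.exp (-(suppFn K z) - ‖z‖ / n))

/-- Membership in `Exp(K)`: `f` is entire and all the norms `‖f‖_{K,n}` are finite. -/
def MemExp (K : Set ℂ) (f : ℂ → ℂ) : Prop :=
  Differentiable ℂ f ∧ ∀ n : ℕ, 0 < n →
    BddAbove (Set.range fun z : ℂ => ‖f z‖ * Real.exp (-(suppFn K z) - ‖z‖ / n))

open scoped Classical in
/-- Lower density of a set of natural numbers. -/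
noncomputable def lowerDensity (A : Set ℕ) : ℝ :=
  liminf (fun N : ℕ =>
    (((Finset.range (N + 1)).filter (fun n => n ∈ A)).card : ℝ) / N) atTop

/-- Lower density of a discrete subset of `ℂ`. -/
noncomputable def ldensC (Λ : Set ℂ) : ℝ :=
  liminf (fun r : ℝ => (Nat.card {z : ℂ // z ∈ Λ ∧ ‖z‖ ≤ r} : ℝ) / r) atTop

/-- `f` is hypercyclic for the translation `T₁` on `Exp(K)`. -/
def HCExp (K : Set ℂ) (f : ℂ → ℂ) : Prop :=
  MemExp K f ∧ ∀ g : ℂ → ℂ, MemExp K g → ∀ n : ℕ, 0 < n → ∀ ε > (0 : ℝ),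
    ∃ k : ℕ, expNorm K n (fun z => f (z + (k : ℂ)) - g z) < ε

/-- `f` is frequently hypercyclic for the translation `T₁` on `Exp(K)`. -/
def FHCExp (K : Set ℂ) (f : ℂ → ℂ) : Prop :=
  MemExp K f ∧ ∀ g : ℂ → ℂ, MemExp K g → ∀ n : ℕ, 0 < n → ∀ ε > (0 : ℝ),
    0 < lowerDensity {k : ℕ | expNorm K n (fun z => f (z + (k : ℂ)) - g z) < ε}

/-- `f` is hypercyclic (Birkhoff-universal) for `T₁` on `H(ℂ)`. -/
def HCEnt (f : ℂ → ℂ) : Prop :=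
  Differentiable ℂ f ∧ ∀ g : ℂ → ℂ, Differentiable ℂ g → ∀ R > (0 : ℝ), ∀ ε > (0 : ℝ),
    ∃ k : ℕ, ∀ z : ℂ, ‖z‖ ≤ R → ‖f (z + (k : ℂ)) - g z‖ < ε

/-- `f` is frequently hypercyclic (frequently Birkhoff-universal) for `T₁` on `H(ℂ)`. -/
def FHCEnt (f : ℂ → ℂ) : Prop :=
  Differentiable ℂ f ∧ ∀ g : ℂ → ℂ, Differentiable ℂ g → ∀ R > (0 : ℝ), ∀ ε > (0 : ℝ),
    0 < lowerDensity {k : ℕ | ∀ z : ℂ, ‖z‖ ≤ R → ‖f (z + (k : ℂ)) - g z‖ < ε}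

/-- `f` is an entire function of (finite) exponential type. -/
def ExpType (f : ℂ → ℂ) : Prop :=
  Differentiable ℂ f ∧ ∃ C τ : ℝ, ∀ z : ℂ, ‖f z‖ ≤ C * Real.exp (τ * ‖z‖)

/-- The indicator function `h_f(θ) = limsup_{r→∞} log |f(r e^{iθ})| / r`. -/
noncomputable def indicatorFn (f : ℂ → ℂ) (θ : ℝ) : ℝ :=
  limsup (fun r : ℝ => Real.log ‖f ((r : ℂ) * Complex.exp (θ * Complex.I))‖ / r) atTop

open Bornology Metric Set
open scoped Pointwise

/-
Multiplication by `e_{-α}` maps `Exp(K)` isometrically onto `Exp(-α + K)`, so only `α = 0` matters;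
then `H_K ≥ 0`. For `g ∈ Exp(K)` the dilations `g_s(z) = g(s z)` form a family which is holomorphic
in `s` and, since `H_K ≥ 0`, bounded in the norm of `Exp(K)` for `s` close to `[0, 1]`. The
derivatives of `s ↦ g_s` at `s = 0` are multiples of the monomials `z ^ k`, so they lie in the
closure of the polynomials. The identity theorem, applied modulo this closure, propagates that
property along `[0, 1]` from `s = 0` to `s = 1`, where `g_1 = g`.
-/

section WeightedClosure

variable {X F : Type*} [NormedAddCommGroup F] [NormedSpace ℂ F]

/-- The closure of a space `M` of functions `X → F` in the weighted supremum norm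
`sup ‖f x‖ e^{-h x}`. The functions themselves may have infinite norm; only the differences `f - p`
with `p ∈ M` are measured. The weight is encoded by its exponent `h`, which makes it positive. -/
def weightedClosure (h : X → ℝ) (M : Submodule ℂ (X → F)) : Submodule ℂ (X → F) where
  carrier := {f | ∀ ε > 0, ∃ p ∈ M, ∀ x, ‖f x - p x‖ ≤ ε * Real.exp (h x)}
  zero_mem' ε hε := ⟨0, M.zero_mem, fun x ↦ by simpa using by positivity⟩
  add_mem' {f g} hf hg ε hε := by
    obtain ⟨p, hpM, hp⟩ := hf (ε / 2) (half_pos hε)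
    obtain ⟨q, hqM, hq⟩ := hg (ε / 2) (half_pos hε)
    refine ⟨p + q, M.add_mem hpM hqM, fun x ↦ ?_⟩
    calc ‖(f + g) x - (p + q) x‖ ≤ ‖f x - p x‖ + ‖g x - q x‖ := by
          simpa only [Pi.add_apply, add_sub_add_comm] using norm_add_le _ _
      _ ≤ ε * Real.exp (h x) := by linarith [hp x, hq x]
  smul_mem' c f hf ε hε := by
    obtain ⟨p, hpM, hp⟩ := hf (ε / (‖c‖ + 1)) (by positivity)
    refine ⟨c • p, M.smul_mem c hpM, fun x ↦ ?_⟩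
    calc ‖(c • f) x - (c • p) x‖ = ‖c‖ * ‖f x - p x‖ := by
          rw [Pi.smul_apply, Pi.smul_apply, ← smul_sub, norm_smul]
      _ ≤ (‖c‖ + 1) * (ε / (‖c‖ + 1) * Real.exp (h x)) := by
          gcongr
          · exact le_add_of_nonneg_right zero_le_one
          · exact hp x
      _ = ε * Real.exp (h x) := by field_simp

variable {h : X → ℝ} {M : Submodule ℂ (X → F)}

theorem mem_weightedClosure_iff {f : X → F} :
    f ∈ weightedClosure h M ↔ ∀ ε > 0, ∃ p ∈ M, ∀ x, ‖f x - p x‖ ≤ ε * Real.exp (h x) :=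
  Iff.rfl

theorem le_weightedClosure : M ≤ weightedClosure h M := fun f hf ε hε ↦
  ⟨f, hf, fun x ↦ by simpa using by positivity⟩

theorem weightedClosure_idem : weightedClosure h (weightedClosure h M) = weightedClosure h M := by
  refine le_antisymm (fun f hf ε hε ↦ ?_) le_weightedClosure
  obtain ⟨p, hp, hfp⟩ := hf (ε / 2) (half_pos hε)
  obtain ⟨q, hq, hpq⟩ := hp (ε / 2) (half_pos hε)
  refine ⟨q, hq, fun x ↦ ?_⟩
  calc ‖f x - q x‖ ≤ ‖f x - p x‖ + ‖p x - q x‖ := norm_sub_le_norm_sub_add_norm_sub ..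
    _ ≤ ε * Real.exp (h x) := by linarith [hfp x, hpq x]

variable [CompleteSpace F]

theorem mem_weightedClosure_of_hasSum {ι : Type*} {f : ι → X → F} {g : X → F} {b : ι → ℝ}
    (hf : ∀ i, f i ∈ weightedClosure h M) (hb : Summable b)
    (hfb : ∀ i x, ‖f i x‖ ≤ b i * Real.exp (h x)) (hg : ∀ x, HasSum (fun i ↦ f i x) (g x)) :
    g ∈ weightedClosure h M := by
  rw [← weightedClosure_idem]
  intro ε hε
  have hexp (i : ι) (x : X) : ‖Real.exp (-h x) • f i x‖ ≤ b i := by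
    rw [norm_smul, Real.norm_of_nonneg (Real.exp_nonneg _), Real.exp_neg,
      inv_mul_le_iff₀' (Real.exp_pos _)]
    exact hfb i x
  obtain ⟨t, ht⟩ :=
    (Metric.tendstoUniformly_iff.mp (tendstoUniformly_tsum hb hexp) ε hε).exists
  refine ⟨∑ i ∈ t, f i, Submodule.sum_mem _ fun i _ ↦ hf i, fun x ↦ ?_⟩
  have hx := (ht x).le
  rw [((hg x).const_smul _).tsum_eq, ← Finset.smul_sum, dist_eq_norm, ← smul_sub, norm_smul,
    Real.norm_of_nonneg (Real.exp_nonneg _), Real.exp_neg, inv_mul_le_iff₀' (Real.exp_pos _)] at hx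
  rwa [Finset.sum_apply]

variable {Φ : X → ℂ → F} {τ t : ℂ} {ρ C : ℝ}

theorem mem_weightedClosure_of_mem_ball
    (hΦ : ∀ x, DifferentiableOn ℂ (Φ x) (ball τ ρ))
    (hC : ∀ s ∈ ball τ ρ, ∀ x, ‖Φ x s‖ ≤ C * Real.exp (h x))
    (hτ : ∀ k, (fun x ↦ iteratedDeriv k (Φ x) τ) ∈ weightedClosure h M) (ht : t ∈ ball τ ρ) :
    (fun x ↦ Φ x t) ∈ weightedClosure h M := by
  obtain ⟨r, htr, hrρ⟩ := exists_between (mem_ball_iff_norm.mp ht)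
  have hr : 0 < r := (norm_nonneg _).trans_lt htr
  have hsub : closedBall τ r ⊆ ball τ ρ := closedBall_subset_ball hrρ
  have hcauchy (k : ℕ) (x : X) :
      ‖iteratedDeriv k (Φ x) τ‖ ≤ k.factorial * (C * Real.exp (h x)) / r ^ k :=
    norm_iteratedDeriv_le_of_forall_mem_sphere_norm_le k hr ((hΦ x).diffContOnCl_ball hsub)
      fun s hs ↦ hC s (hsub (sphere_subset_closedBall hs)) x
  have hgeom : Summable fun k ↦ C * (‖t - τ‖ / r) ^ k :=
    (summable_geometric_of_lt_one (by positivity) ((div_lt_one hr).mpr htr)).mul_left C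
  refine mem_weightedClosure_of_hasSum
    (f := fun k x ↦ (k.factorial : ℂ)⁻¹ • (t - τ) ^ k • iteratedDeriv k (Φ x) τ)
    (fun k ↦ Submodule.smul_mem _ _ (Submodule.smul_mem _ _ (hτ k))) hgeom (fun k x ↦ ?_)
    fun x ↦ hasSum_taylorSeries_on_ball (hΦ x) ht
  calc ‖(k.factorial : ℂ)⁻¹ • (t - τ) ^ k • iteratedDeriv k (Φ x) τ‖
      = (k.factorial : ℝ)⁻¹ * (‖t - τ‖ ^ k * ‖iteratedDeriv k (Φ x) τ‖) := by
        rw [norm_smul, norm_smul, norm_inv, norm_pow, norm_natCast]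
    _ ≤ (k.factorial : ℝ)⁻¹ * (‖t - τ‖ ^ k *
          (k.factorial * (C * Real.exp (h x)) / r ^ k)) := by
        gcongr
        exact hcauchy k x
    _ = C * (‖t - τ‖ / r) ^ k * Real.exp (h x) := by
        rw [div_pow]
        field_simp

theorem iteratedDeriv_mem_weightedClosure_of_mem_ball
    (hΦ : ∀ x, DifferentiableOn ℂ (Φ x) (ball τ ρ))
    (hC : ∀ s ∈ ball τ ρ, ∀ x, ‖Φ x s‖ ≤ C * Real.exp (h x))
    (hτ : ∀ k, (fun x ↦ iteratedDeriv k (Φ x) τ) ∈ weightedClosure h M)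
    (ht : t ∈ ball τ (ρ / 2)) (k : ℕ) :
    (fun x ↦ iteratedDeriv k (Φ x) t) ∈ weightedClosure h M := by
  have hρ : 0 < ρ / 2 := pos_of_mem_ball ht
  have hsub {s : ℂ} (hs : s ∈ ball τ (ρ / 2)) : closedBall s (ρ / 2) ⊆ ball τ ρ :=
    closedBall_subset_ball' (by linarith [mem_ball.mp hs])
  refine mem_weightedClosure_of_mem_ball (Φ := fun x ↦ iteratedDeriv k (Φ x))
    (C := k.factorial * C / (ρ / 2) ^ k) (fun x ↦ ?_) (fun s hs x ↦ ?_) (fun j ↦ ?_) ht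
  · rw [iteratedDeriv_eq_iterate]
    exact (((hΦ x).analyticOnNhd isOpen_ball).iterated_deriv k).differentiableOn.mono
      (ball_subset_ball (by linarith))
  · calc ‖iteratedDeriv k (Φ x) s‖
        ≤ k.factorial * (C * Real.exp (h x)) / (ρ / 2) ^ k :=
          norm_iteratedDeriv_le_of_forall_mem_sphere_norm_le k hρ
            ((hΦ x).diffContOnCl_ball (hsub hs))
            fun w hw ↦ hC w (hsub hs (sphere_subset_closedBall hw)) x
      _ = k.factorial * C / (ρ / 2) ^ k * Real.exp (h x) := by ring
  · simpa only [iteratedDeriv_eq_iterate, ← Function.iterate_add_apply] using hτ (j + k)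

theorem mem_weightedClosure_of_isPreconnected {U : Set ℂ} {a b : ℂ} (hU : IsOpen U)
    (hUc : IsPreconnected U) (hΦ : ∀ x, DifferentiableOn ℂ (Φ x) U)
    (hC : ∀ s ∈ U, ∀ x, ‖Φ x s‖ ≤ C * Real.exp (h x)) (ha : a ∈ U)
    (haM : ∀ k, (fun x ↦ iteratedDeriv k (Φ x) a) ∈ weightedClosure h M) (hb : b ∈ U) :
    (fun x ↦ Φ x b) ∈ weightedClosure h M := by
  let P (s : ℂ) : Prop := ∀ k, (fun x ↦ iteratedDeriv k (Φ x) s) ∈ weightedClosure h M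
  have hstep {s t : ℂ} {r : ℝ} (hr : ball s r ⊆ U) (ht : t ∈ ball s (r / 2)) (hs : P s) : P t :=
    iteratedDeriv_mem_weightedClosure_of_mem_ball (fun x ↦ (hΦ x).mono hr)
      (fun w hw ↦ hC w (hr hw)) hs ht
  suffices hP : P a → P b by simpa only [iteratedDeriv_zero] using hP haM 0
  refine hUc.induction₂' (fun s t ↦ P s → P t) (fun s hs ↦ ?_)
    (fun _ _ _ _ _ _ hst htu ↦ htu ∘ hst) ha hb
  obtain ⟨r, hr, hrU⟩ := Metric.isOpen_iff.mp hU s hs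
  filter_upwards [mem_nhdsWithin_of_mem_nhds (ball_mem_nhds s (by positivity : 0 < r / 4))]
    with t ht
  have hts : dist t s < r / 4 := ht
  refine ⟨hstep hrU (ball_subset_ball (by linarith) ht),
    hstep ((ball_subset_ball' ?_).trans hrU) (r := r / 2) (mem_ball'.mpr ?_)⟩ <;> linarith

end WeightedClosure

section Polynomials

/-- The space of polynomial functions on `ℂ`, as a subspace of all functions, so that its
`weightedClosure` can be formed. -/
noncomputable def polynomialFunctionSpace : Submodule ℂ (ℂ → ℂ) :=
  LinearMap.range (LinearMap.pi Polynomial.leval)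

theorem mem_polynomialFunctionSpace_iff {f : ℂ → ℂ} :
    f ∈ polynomialFunctionSpace ↔ ∃ P : Polynomial ℂ, (fun z ↦ P.eval z) = f :=
  Iff.rfl

theorem iteratedDeriv_dilation_zero_mem_polynomialFunctionSpace {g : ℂ → ℂ}
    (hg : Differentiable ℂ g) (k : ℕ) :
    (fun z ↦ iteratedDeriv k (fun s ↦ g (z * s)) 0) ∈ polynomialFunctionSpace := by
  refine mem_polynomialFunctionSpace_iff.mpr
    ⟨Polynomial.C (iteratedDeriv k g 0) * Polynomial.X ^ k, funext fun z ↦ ?_⟩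
  simp only [iteratedDeriv_comp_const_mul hg.contDiff, mul_zero, Polynomial.eval_mul,
    Polynomial.eval_C, Polynomial.eval_pow, Polynomial.eval_X]
  exact mul_comm _ _

theorem mem_weightedClosure_polynomialFunctionSpace_of_norm_dilation_le {g : ℂ → ℂ} {h : ℂ → ℝ}
    {U : Set ℂ} {C : ℝ} (hg : Differentiable ℂ g) (hU : IsOpen U) (hUc : IsPreconnected U)
    (h0 : 0 ∈ U) (h1 : 1 ∈ U)
    (hC : ∀ s ∈ U, ∀ z, ‖g (z * s)‖ ≤ C * Real.exp (h z)) :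
    g ∈ weightedClosure h polynomialFunctionSpace := by
  have hmem := mem_weightedClosure_of_isPreconnected (Φ := fun z s ↦ g (z * s)) hU hUc
    (fun z ↦ (hg.comp (differentiable_id.const_mul z)).differentiableOn) hC h0
    (fun k ↦ le_weightedClosure (iteratedDeriv_dilation_zero_mem_polynomialFunctionSpace hg k)) h1
  simpa only [mul_one] using hmem

end Polynomials

section SupportFunction

variable {K : Set ℂ} {R : ℝ}

theorem re_mul_le_of_subset_closedBall (hKR : K ⊆ closedBall 0 R) {u : ℂ} (hu : u ∈ K) (z : ℂ) :
    (z * u).re ≤ R * ‖z‖ :=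
  calc (z * u).re ≤ ‖z‖ * ‖u‖ := (re_le_norm _).trans_eq (norm_mul z u)
    _ ≤ R * ‖z‖ := by
      rw [mul_comm]
      gcongr
      exact mem_closedBall_zero_iff.mp (hKR hu)

theorem bddAbove_re_mul_image (hK : IsBounded K) (z : ℂ) :
    BddAbove ((fun u ↦ (z * u).re) '' K) := by
  obtain ⟨R, hKR⟩ := hK.subset_closedBall 0
  exact ⟨R * ‖z‖, forall_mem_image.mpr fun u hu ↦ re_mul_le_of_subset_closedBall hKR hu z⟩

theorem re_mul_le_suppFn_of_mem (hK : IsBounded K) {u : ℂ} (hu : u ∈ K) (z : ℂ) :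
    (z * u).re ≤ suppFn K z :=
  le_csSup (bddAbove_re_mul_image hK z) (mem_image_of_mem _ hu)

theorem re_mul_le_suppFn (hK : IsBounded K) {α : ℂ} (hα : α ∈ closedConvexHull ℝ K) (z : ℂ) :
    (z * α).re ≤ suppFn K z :=
  closedConvexHull_min (t := {u | (z * u).re ≤ suppFn K z})
    (fun _ hu ↦ re_mul_le_suppFn_of_mem hK hu z)
    ((convex_halfSpace_re_le _).linear_preimage (LinearMap.mulLeft ℝ z))
    (isClosed_le (by fun_prop) continuous_const) hα

theorem suppFn_le (hne : K.Nonempty) {z : ℂ} {c : ℝ} (h : ∀ u ∈ K, (z * u).re ≤ c) :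
    suppFn K z ≤ c :=
  csSup_le (hne.image _) (forall_mem_image.mpr h)

theorem suppFn_vadd (hne : K.Nonempty) (hK : IsBounded K) (β z : ℂ) :
    suppFn (β +ᵥ K) z = suppFn K z + (z * β).re := by
  have himage : (fun u ↦ (z * u).re) '' (β +ᵥ K) =
      OrderIso.addRight (z * β).re '' ((fun u ↦ (z * u).re) '' K) := by
    rw [← image_vadd, image_image, image_image]
    refine image_congr fun u _ ↦ ?_
    simp [mul_add, add_comm]
  rw [suppFn, himage, ← OrderIso.map_csSup' _ (hne.image _) (bddAbove_re_mul_image hK z)]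
  rfl

/- Write `z s = τ z + z (s - τ)`: the first term contributes at most `τ H_K(z) ≤ H_K(z)`. -/
theorem suppFn_mul_le (hne : K.Nonempty) (hKR : K ⊆ closedBall 0 R) {z s : ℂ} {τ : ℝ}
    (hz : 0 ≤ suppFn K z) (hτ : τ ∈ Icc 0 1) :
    suppFn K (z * s) ≤ suppFn K z + R * ‖s - τ‖ * ‖z‖ := by
  refine suppFn_le hne fun u hu ↦ ?_
  have hu' : (z * u).re ≤ suppFn K z :=
    re_mul_le_suppFn_of_mem (isBounded_closedBall.subset hKR) hu z
  calc (z * s * u).re = τ * (z * u).re + (z * (s - τ) * u).re := by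
        rw [← re_ofReal_mul, ← add_re]
        ring_nf
    _ ≤ suppFn K z + R * ‖z * (s - τ)‖ :=
        add_le_add ((mul_le_mul_of_nonneg_left hu' hτ.1).trans (mul_le_of_le_one_left hz hτ.2))
          (re_mul_le_of_subset_closedBall hKR hu _)
    _ = suppFn K z + R * ‖s - τ‖ * ‖z‖ := by rw [norm_mul]; ring

end SupportFunction

section ExpSpace

variable {K : Set ℂ} {g : ℂ → ℂ} {n : ℕ} {ε : ℝ}

theorem MemExp.exists_norm_le (hg : MemExp K g) (hn : 0 < n) :
    ∃ C, 0 ≤ C ∧ ∀ z, ‖g z‖ ≤ C * Real.exp (suppFn K z + ‖z‖ / n) := by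
  obtain ⟨C, hC⟩ := hg.2 n hn
  have hCz (z : ℂ) : ‖g z‖ * Real.exp (-suppFn K z - ‖z‖ / n) ≤ C := hC (mem_range_self z)
  refine ⟨C, le_trans (by positivity) (hCz 0), fun z ↦ ?_⟩
  rw [← div_le_iff₀ (Real.exp_pos _), div_eq_mul_inv, ← Real.exp_neg, neg_add']
  exact hCz z

theorem expNorm_le {c : ℝ} (h : ∀ z, ‖g z‖ ≤ c * Real.exp (suppFn K z + ‖z‖ / n)) :
    expNorm K n g ≤ c := by
  refine csSup_le (range_nonempty _) (forall_mem_range.mpr fun z ↦ ?_)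
  rw [← neg_add', Real.exp_neg, ← div_eq_mul_inv, div_le_iff₀ (Real.exp_pos _)]
  exact h z

theorem norm_mul_exp_mul_exp_neg_suppFn_vadd (hne : K.Nonempty) (hK : IsBounded K) (g : ℂ → ℂ)
    (n : ℕ) (β z : ℂ) :
    ‖g z * exp (β * z)‖ * Real.exp (-suppFn (β +ᵥ K) z - ‖z‖ / n) =
      ‖g z‖ * Real.exp (-suppFn K z - ‖z‖ / n) := by
  rw [norm_mul, norm_exp, mul_assoc, ← Real.exp_add, suppFn_vadd hne hK, mul_comm z β]
  ring_nf

theorem expNorm_vadd_mul_exp (hne : K.Nonempty) (hK : IsBounded K) (g : ℂ → ℂ) (n : ℕ) (β : ℂ) :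
    expNorm (β +ᵥ K) n (fun z ↦ g z * exp (β * z)) = expNorm K n g := by
  simp only [expNorm, norm_mul_exp_mul_exp_neg_suppFn_vadd hne hK]

theorem MemExp.vadd_mul_exp (hg : MemExp K g) (hne : K.Nonempty) (hK : IsBounded K) (β : ℂ) :
    MemExp (β +ᵥ K) fun z ↦ g z * exp (β * z) := by
  refine ⟨hg.1.mul (by fun_prop), fun n hn ↦ ?_⟩
  simpa only [norm_mul_exp_mul_exp_neg_suppFn_vadd hne hK] using hg.2 n hn

theorem MemExp.exists_norm_mul_le_of_mem_thickening (hg : MemExp K g) (hne : K.Nonempty)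
    (hK : IsBounded K) (h0 : ∀ z, 0 ≤ suppFn K z) (hn : 0 < n) :
    ∃ ρ > 0, ∃ C, ∀ s ∈ thickening ρ (ofReal '' Icc 0 1), ∀ z,
      ‖g (z * s)‖ ≤ C * Real.exp (suppFn K z + ‖z‖ / n) := by
  obtain ⟨R, hR, hKR⟩ := hK.subset_closedBall_lt 0 0
  obtain ⟨C, hC0, hC⟩ := hg.exists_norm_le (n := 2 * n) (by positivity)
  -- This `ρ` solves `R ρ + (1 + ρ) / (2 n) = 1 / n`.
  let ρ : ℝ := 1 / (2 * n * R + 1)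
  have hρ : R * ρ + (1 + ρ) / (2 * n) = 1 / n := by
    simp only [ρ]
    field_simp
    ring
  refine ⟨ρ, by positivity, C, fun s hs z ↦ (hC _).trans ?_⟩
  obtain ⟨_, ⟨τ, hτ, rfl⟩, hsτ⟩ := mem_thickening_iff.mp hs
  replace hsτ : ‖s - τ‖ ≤ ρ := (mem_ball_iff_norm.mp hsτ).le
  have hs' : ‖s‖ ≤ 1 + ρ := by
    have hτ' : ‖(τ : ℂ)‖ ≤ 1 := by
      rw [norm_real, Real.norm_of_nonneg hτ.1]
      exact hτ.2
    linarith [norm_sub_norm_le s τ]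
  gcongr C * Real.exp ?_
  calc suppFn K (z * s) + ‖z * s‖ / (2 * n : ℕ)
      ≤ (suppFn K z + R * ‖s - τ‖ * ‖z‖) + ‖z‖ * ‖s‖ / (2 * n) := by
        rw [norm_mul]
        push_cast
        gcongr
        exact suppFn_mul_le hne hKR (h0 z) hτ
    _ ≤ (suppFn K z + R * ρ * ‖z‖) + ‖z‖ * (1 + ρ) / (2 * n) := by gcongr
    _ = suppFn K z + ‖z‖ * (R * ρ + (1 + ρ) / (2 * n)) := by ring
    _ = suppFn K z + ‖z‖ / n := by rw [hρ, mul_one_div]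

theorem MemExp.exists_polynomial_expNorm_sub_lt (hg : MemExp K g) (hne : K.Nonempty)
    (hK : IsBounded K) (h0 : ∀ z, 0 ≤ suppFn K z) (hn : 0 < n) (hε : 0 < ε) :
    ∃ P : Polynomial ℂ, expNorm K n (fun z ↦ g z - P.eval z) < ε := by
  obtain ⟨ρ, hρ, C, hC⟩ := hg.exists_norm_mul_le_of_mem_thickening hne hK h0 hn
  have hconv : Convex ℝ (ofReal '' Icc 0 1) :=
    (convex_Icc (0 : ℝ) 1).linear_image ofRealCLM.toLinearMap
  have hsub := self_subset_thickening hρ (ofReal '' Icc 0 1)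
  have hmem := mem_weightedClosure_polynomialFunctionSpace_of_norm_dilation_le hg.1
    isOpen_thickening (hconv.thickening ρ).isPreconnected (hsub ⟨0, by simp⟩)
    (hsub ⟨1, by simp⟩) hC
  obtain ⟨_, ⟨P, rfl⟩, hP⟩ := mem_weightedClosure_iff.mp hmem (ε / 2) (half_pos hε)
  exact ⟨P, (expNorm_le hP).trans_lt (half_lt_self hε)⟩

end ExpSpace

theorem stmt12_general {K : Set ℂ} (hK : IsBounded K) {α : ℂ} (hα : α ∈ closedConvexHull ℝ K)
    {g : ℂ → ℂ} (hg : MemExp K g) {n : ℕ} (hn : 0 < n) {ε : ℝ} (hε : 0 < ε) :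
    ∃ P : Polynomial ℂ, expNorm K n (fun z ↦ g z - P.eval z * exp (α * z)) < ε := by
  have hne : K.Nonempty := by
    rw [closedConvexHull_eq_closure_convexHull] at hα
    exact convexHull_nonempty_iff.mp (closure_nonempty_iff.mp ⟨α, hα⟩)
  have h0 (z : ℂ) : 0 ≤ suppFn (-α +ᵥ K) z := by
    rw [suppFn_vadd hne hK, mul_neg, neg_re, ← sub_eq_add_neg, sub_nonneg]
    exact re_mul_le_suppFn hK hα z
  obtain ⟨P, hP⟩ := (hg.vadd_mul_exp hne hK (-α)).exists_polynomial_expNorm_sub_lt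
    hne.vadd_set (hK.vadd (-α)) h0 hn hε
  refine ⟨P, ?_⟩
  rw [← expNorm_vadd_mul_exp hne hK _ n (-α)]
  simpa only [sub_mul, mul_assoc, ← Complex.exp_add, neg_mul, add_neg_cancel, Complex.exp_zero,
    mul_one] using hP

/-- For each `α ∈ K`, the set `{P·e_α : P polynomial}` is dense in `Exp(K)`. -/
theorem stmt12 (K : Set ℂ) (hne : K.Nonempty) (hKc : IsCompact K) (hKconv : Convex ℝ K)
    (α : ℂ) (hα : α ∈ K)
    (g : ℂ → ℂ) (hg : MemExp K g) (n : ℕ) (hn : 0 < n) (ε : ℝ) (hε : 0 < ε) :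
    ∃ P : Polynomial ℂ,
      expNorm K n (fun z => g z - P.eval z * Complex.exp (α * z)) < ε :=
  stmt12_general hKc.isBounded (subset_closedConvexHull hα) hg hn hε
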